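/- Let L be a monic differential operator of order n over 𝔽_p(x) whose companion system is Y' + B(x)Y = 0, and let Δ(F) = F' + B·F. Then Δ^p = 0 if and only if L divides ∂^p on the left in 𝔽_p(x)⟨∂⟩ (i.e. the remainder of the left Euclidean division of ∂^p by L is zero). -/

import Mathlib

/-! The map `Δ F = F' + B F` is dual to the connection `∇ r = r' - r B` on row vectors:
`⟨r, F⟩' = ⟨∇ r, F⟩ + ⟨r, Δ F⟩`. The derivation of `𝔽_p(x)` has vanishing `p`-th power, so Leibniz's
rule applied `p` times gives `⟨∇^p r, F⟩ = -⟨r, Δ^p F⟩` (`dualConn_iterate_p`), and `Δ^p = 0` if and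
only if `∇^p = 0`.

With `D = 𝔽_p(x)⟨∂⟩`, the row vectors with `∇` are the left `D`-module `D / D L` with `∂` acting by
left multiplication: the map `D → Kⁿ`, `A ↦ A · e_0` sends `∂^i` to `e_i` for `i < n` and kills `L`
(`oreRem_of_deg_lt`, `oreRem_L`). As `∂^p` is central and `e_0` generates, `∇^p = 0` is equivalent to
`∂^p · e_0 = 0`, which by Euclidean division (`exists_ore_div`) means `∂^p = Q L` for some `Q`.
Since `∂^p` is central and `D` is a domain, `∂^p = Q L` is equivalent to `∂^p = L Q`
(`oreEval_comm_p`).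

No ring structure is put on the set `K[X]` of operators: all products are instances of the action
`oreEval` of operators on a differential module. -/

open Polynomial

/-- Formal derivative of a rational function, via the quotient rule on the
canonical numerator/denominator representation. -/
noncomputable def rderiv {F : Type*} [Field F] (f : RatFunc F) : RatFunc F :=
  algebraMap (Polynomial F) (RatFunc F)
      (Polynomial.derivative f.num * f.denom - f.num * Polynomial.derivative f.denom) /
    algebraMap (Polynomial F) (RatFunc F) (f.denom ^ 2)

/-- Multiplication in the Ore ring `F(x)⟨∂⟩` of linear differential operators,
where an operator `∑ aᵢ ∂^i` is represented by the polynomial `∑ aᵢ Xⁱ` with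
coefficients in `F(x)`; it is governed by the rule `∂·r = r·∂ + r'`, so that
`(a ∂^i)·(b ∂^j) = ∑_{l ≤ i} C(i,l)·a·b⁽ˡ⁾·∂^{i−l+j}`. -/
noncomputable def omul {F : Type*} [Field F]
    (A B : Polynomial (RatFunc F)) : Polynomial (RatFunc F) :=
  A.sum fun i a => B.sum fun j b =>
    ∑ l ∈ Finset.range (i + 1),
      Polynomial.monomial (i - l + j) ((i.choose l : RatFunc F) * a * rderiv^[l] b)

/-! ### Differential operators acting on a differential module -/

/-- The derivations of a field `K`. The `ℤ`-algebra structure is elaborated for an abstract field, so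
the abbreviation pins it to the one from the ring structure; on `RatFunc F` there are other instance
paths. -/
abbrev FieldDerivation (K : Type*) [Field K] := Derivation ℤ K K

/-- A map that is additive and satisfies the product rule, as a derivation. -/
def FieldDerivation.mk {K : Type*} [Field K] (d : K → K) (hadd : ∀ f g, d (f + g) = d f + d g)
    (hmul : ∀ f g, d (f * g) = f * d g + g * d f) : FieldDerivation K :=
  Derivation.mk' (AddMonoidHom.mk' d hadd).toIntLinearMap hmul

theorem iterate_map_finsetSum {M ι : Type*} [AddCommMonoid M] (N : M →+ M) (i : ℕ)
    (s : Finset ι) (f : ι → M) : N^[i] (∑ j ∈ s, f j) = ∑ j ∈ s, N^[i] (f j) := by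
  induction i with
  | zero => rfl
  | succ i ih => simp only [Function.iterate_succ_apply', ih, map_sum]

section OreModule
variable {K : Type*} [Field K] (δ : FieldDerivation K)

/-- The derivation `δ` applied to each coefficient of a polynomial. -/
noncomputable def coeffDeriv : K[X] →+ K[X] where
  toFun A := A.sum fun i a => monomial i (δ a)
  map_zero' := by simp
  map_add' A B := sum_add_index _ _ _ (by simp) (by simp)

theorem coeffDeriv_monomial (i : ℕ) (a : K) :
    coeffDeriv δ (monomial i a) = monomial i (δ a) :=
  sum_monomial_index a (fun i a => monomial i (δ a)) (by simp)

theorem coeff_coeffDeriv (A : K[X]) (k : ℕ) : (coeffDeriv δ A).coeff k = δ (A.coeff k) := by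
  induction A using Polynomial.induction_on' with
  | add p q hp hq => simp only [map_add, coeff_add, hp, hq]
  | monomial i a =>
    rw [coeffDeriv_monomial, coeff_monomial, coeff_monomial]
    split_ifs <;> simp

/-- Left multiplication by `∂` in the Ore ring `K⟨∂⟩`, where `∑ aᵢ ∂^i` is encoded as `∑ aᵢ Xⁱ`:
since `∂ a = a ∂ + δ a`, it is multiplication by `X` plus `δ` on the coefficients. -/
noncomputable def oreT : K[X] →+ K[X] :=
  AddMonoidHom.mulLeft X + coeffDeriv δ

theorem oreT_apply (A : K[X]) : oreT δ A = X * A + coeffDeriv δ A := rfl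

theorem oreT_monomial (i : ℕ) (a : K) :
    oreT δ (monomial i a) = monomial (i + 1) a + monomial i (δ a) := by
  rw [oreT_apply, X_mul_monomial, coeffDeriv_monomial]

/-- The action `A ↦ A · v` of the operators `A = ∑ aᵢ ∂^i` on a vector `v` of a `K`-module on which
`∂` acts by the additive map `N`. Taking `N = oreT δ` and `v = B` gives the product `A B` in the
Ore ring. -/
noncomputable def oreEval {M : Type*} [AddCommGroup M] [Module K M] (N : M →+ M) (v : M) :
    K[X] →+ M where
  toFun A := A.sum fun i a => a • N^[i] v
  map_zero' := by simp
  map_add' A B := sum_add_index _ _ _ (by simp) (by simp [add_smul])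

section
variable {M : Type*} [AddCommGroup M] [Module K M] (N : M →+ M)

theorem oreEval_monomial (v : M) (i : ℕ) (a : K) :
    oreEval N v (monomial i a) = a • N^[i] v := by
  simp [oreEval, sum_monomial_index]

theorem oreEval_C_mul (v : M) (c : K) (A : K[X]) :
    oreEval N v (C c * A) = c • oreEval N v A := by
  induction A using Polynomial.induction_on' with
  | add p q hp hq => simp only [mul_add, map_add, hp, hq, smul_add]
  | monomial i a => rw [C_mul_monomial, oreEval_monomial, oreEval_monomial, mul_smul]

theorem oreEval_zero_right (A : K[X]) : oreEval N (0 : M) A = 0 := by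
  induction A using Polynomial.induction_on' with
  | add p q hp hq => simp only [map_add, hp, hq, add_zero]
  | monomial i a => rw [oreEval_monomial, iterate_map_zero, smul_zero]

theorem oreEval_add_right (v w : M) (A : K[X]) :
    oreEval N (v + w) A = oreEval N v A + oreEval N w A := by
  induction A using Polynomial.induction_on' with
  | add p q hp hq => simp only [map_add, hp, hq]; abel
  | monomial i a => simp only [oreEval_monomial, iterate_map_add, smul_add]

theorem oreEval_X_pow (v : M) (i : ℕ) : oreEval N v (X ^ i : K[X]) = N^[i] v := by
  rw [← monomial_one_right_eq_X_pow, oreEval_monomial, one_smul]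

variable (hN : ∀ (a : K) (v : M), N (a • v) = a • N v + δ a • v)
include hN

theorem oreEval_oreT (v : M) (A : K[X]) :
    oreEval N v (oreT δ A) = N (oreEval N v A) := by
  induction A using Polynomial.induction_on' with
  | add p q hp hq => simp only [map_add, hp, hq]
  | monomial i a =>
    rw [oreT_monomial, map_add, oreEval_monomial, oreEval_monomial, oreEval_monomial, hN,
      Function.iterate_succ_apply']

theorem oreEval_oreT_iterate (v : M) (A : K[X]) (i : ℕ) :
    oreEval N v ((oreT δ)^[i] A) = N^[i] (oreEval N v A) := by
  induction i with
  | zero => rfl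
  | succ i ih => rw [Function.iterate_succ_apply', Function.iterate_succ_apply',
      oreEval_oreT δ N hN, ih]

/-- `(A B) · v = A · (B · v)` in every differential module; for `N = oreT δ` this is the
associativity of the Ore ring. -/
theorem oreEval_oreEval (v : M) (A B : K[X]) :
    oreEval N v (oreEval (oreT δ) B A) = oreEval N (oreEval N v B) A := by
  induction A using Polynomial.induction_on' with
  | add p q hp hq => simp only [map_add, hp, hq]
  | monomial i a =>
    rw [oreEval_monomial, oreEval_monomial, smul_eq_C_mul, oreEval_C_mul,
      oreEval_oreT_iterate δ N hN]
end

theorem oreT_smul (a : K) (A : K[X]) :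
    oreT δ (a • A) = a • oreT δ A + δ a • A := by
  have h : coeffDeriv δ (a • A) = a • coeffDeriv δ A + δ a • A := by
    ext k
    simp only [coeff_coeffDeriv, coeff_smul, coeff_add, smul_eq_mul, Derivation.leibniz]
    ring
  rw [oreT_apply, oreT_apply, h, mul_smul_comm, smul_add, add_assoc]

theorem oreT_iterate_one (i : ℕ) : (oreT δ)^[i] 1 = X ^ i := by
  induction i with
  | zero => simp
  | succ i ih =>
    rw [Function.iterate_succ_apply', ih, ← monomial_one_right_eq_X_pow, oreT_monomial]
    simp [monomial_one_right_eq_X_pow]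

theorem oreEval_one (A : K[X]) : oreEval (oreT δ) 1 A = A := by
  induction A using Polynomial.induction_on' with
  | add p q hp hq => simp only [map_add, hp, hq]
  | monomial i a => rw [oreEval_monomial, oreT_iterate_one, smul_X_eq_monomial]

/-- `∂^i A` has the degree of `A` raised by `i` and the same leading coefficient. -/
theorem coeff_oreT_iterate (A : K[X]) (d i : ℕ) (hd : A.natDegree ≤ d) :
    ((oreT δ)^[i] A).coeff (i + d) = A.coeff d ∧
      ∀ k, i + d < k → ((oreT δ)^[i] A).coeff k = 0 := by
  induction i with
  | zero =>
    rw [Function.iterate_zero_apply]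
    exact ⟨by simp, fun k hk => coeff_eq_zero_of_natDegree_lt (by lia)⟩
  | succ i ih =>
    rw [Function.iterate_succ_apply', oreT_apply]
    constructor
    · rw [show i + 1 + d = (i + d) + 1 by ring, coeff_add, coeff_X_mul, ih.1,
        coeff_coeffDeriv, ih.2 _ (by lia)]
      simp
    · rintro (_ | k) hk
      · lia
      · rw [coeff_add, coeff_X_mul, coeff_coeffDeriv, ih.2 _ (by lia), ih.2 _ (by lia)]
        simp

/-- The Ore ring has no zero divisors: leading coefficients multiply. -/
theorem oreEval_oreT_ne_zero {A B : K[X]} (hA : A ≠ 0) (hB : B ≠ 0) :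
    oreEval (oreT δ) B A ≠ 0 := by
  intro h
  have h1 : (oreEval (oreT δ) B A).coeff (A.natDegree + B.natDegree)
      = A.leadingCoeff * B.leadingCoeff := by
    change (A.sum fun i a => a • (oreT δ)^[i] B).coeff _ = _
    rw [Polynomial.sum_def, finsetSum_coeff, Finset.sum_eq_single A.natDegree]
    · rw [coeff_smul, (coeff_oreT_iterate δ B _ _ le_rfl).1]; rfl
    · intro i hi hne
      have := le_natDegree_of_mem_supp i hi
      rw [coeff_smul, (coeff_oreT_iterate δ B _ i le_rfl).2 _ (by lia), smul_zero]
    · intro h; simp at h; contradiction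
  rw [h, coeff_zero] at h1
  exact mul_ne_zero (leadingCoeff_ne_zero.2 hA) (leadingCoeff_ne_zero.2 hB) h1.symm

/-- The commutation rule `∂^i b = ∑ C(i,l) b⁽ˡ⁾ ∂^(i-l)`. -/
theorem oreT_iterate_monomial (i j : ℕ) (b : K) :
    (oreT δ)^[i] (monomial j b) =
      ∑ l ∈ Finset.range (i + 1), monomial (i - l + j) ((i.choose l : K) * δ^[l] b) := by
  rw [← Finset.Nat.sum_antidiagonal_eq_sum_range_succ
    (fun l m => monomial (m + j) ((i.choose l : K) * δ^[l] b))]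
  have key : ∀ i, (oreT δ)^[i] (monomial j b) = ∑ x ∈ Finset.HasAntidiagonal.antidiagonal i,
      i.choose x.1 • monomial (x.2 + j) (δ^[x.1] b) := by
    intro i
    induction i with
    | zero => simp
    | succ i ih =>
      rw [Finset.sum_antidiagonal_choose_succ_nsmul
        (fun l m => monomial (m + j) (δ^[l] b)), Function.iterate_succ_apply', ih, map_sum]
      simp only [map_nsmul, oreT_monomial, nsmul_add, Finset.sum_add_distrib]
      congr 1
      · refine Finset.sum_congr rfl fun x _ => ?_
        rw [show x.2 + j + 1 = x.2 + 1 + j by ring]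
      · refine Finset.sum_congr rfl fun x hx => ?_
        rw [Nat.choose_symm_of_eq_add (Finset.HasAntidiagonal.mem_antidiagonal.1 hx).symm,
          Function.iterate_succ_apply']
  rw [key]
  refine Finset.sum_congr rfl fun x _ => ?_
  rw [← map_nsmul, nsmul_eq_mul]

/-! ### Characteristic `p`: the centre and Leibniz's rule -/

section CharP
variable (p : ℕ) [hp : Fact p.Prime] [CharP K p] (hδ : ∀ a, δ^[p] a = 0)
include hδ

/-- `∂^p` commutes with scalars, so it multiplies from the left as the commuting variable `X ^ p`:
the middle binomial coefficients and `δ^p` vanish. -/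
theorem oreT_iterate_p (A : K[X]) : (oreT δ)^[p] A = X ^ p * A := by
  induction A using Polynomial.induction_on' with
  | add f g hf hg => rw [iterate_map_add, hf, hg, mul_add]
  | monomial j b =>
    rw [oreT_iterate_monomial, Finset.sum_eq_single 0]
    · simp [X_pow_mul_monomial, add_comm]
    · intro l hl h0
      obtain rfl | hlt := eq_or_lt_of_le (Finset.mem_range_succ_iff.1 hl)
      · simp [hδ]
      · rw [(CharP.cast_eq_zero_iff K p _).2 (hp.out.dvd_choose_self h0 hlt)]; simp
    · simp

/-- `A ∂^p = X ^ p * A`; together with `oreT_iterate_p` this says that `∂^p` is central. -/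
theorem oreEval_X_pow_p (A : K[X]) : oreEval (oreT δ) (X ^ p) A = X ^ p * A := by
  induction A using Polynomial.induction_on' with
  | add f g hf hg => rw [map_add, mul_add, hf, hg]
  | monomial i a =>
    rw [oreEval_monomial, ← oreT_iterate_one δ, ← Function.iterate_add_apply, add_comm,
      Function.iterate_add_apply, oreT_iterate_p δ p hδ, oreT_iterate_one, oreT_iterate_one,
      ← smul_X_eq_monomial, mul_smul_comm]

/-- `∂^p = A B` implies `∂^p = B A`: by centrality `A (B A) = ∂^p A = A ∂^p`, and `A` can be
cancelled. -/
theorem oreEval_comm_p {A B : K[X]} (h : X ^ p = oreEval (oreT δ) B A) :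
    X ^ p = oreEval (oreT δ) A B := by
  have hA : A ≠ 0 := by
    rintro rfl; simp at h
  have assoc := oreEval_oreEval δ (oreT δ) (oreT_smul δ)
  by_contra hne
  refine oreEval_oreT_ne_zero δ hA (sub_ne_zero.2 (Ne.symm hne)) ?_
  have h2 := oreEval_add_right (oreT δ) (oreEval (oreT δ) A B - X ^ p) (X ^ p) A
  rw [sub_add_cancel, ← assoc, ← h, oreEval_X_pow_p δ p hδ, oreEval_X_pow,
    oreT_iterate_p δ p hδ] at h2
  simpa using h2

/-- If `N` and `D` are adjoint connections for a pairing `φ`, meaning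
`δ ⟨r, F⟩ = ⟨N r, F⟩ + ⟨r, D F⟩`, then `N^p` and `-D^p` are adjoint: in Leibniz's rule for
`δ^p ⟨r, F⟩ = 0` only the two extreme terms survive. -/
theorem iterate_pairing {M M' : Type*} [AddCommGroup M] [AddCommGroup M']
    (N : M →+ M) (D : M' →+ M') (φ : M →+ M' →+ K)
    (h : ∀ r F, δ (φ r F) = φ (N r) F + φ r (D F)) (r : M) (F : M') :
    φ (N^[p] r) F = - φ r (D^[p] F) := by
  have key : ∀ i, δ^[i] (φ r F) = ∑ x ∈ Finset.HasAntidiagonal.antidiagonal i,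
      i.choose x.1 • φ (N^[x.1] r) (D^[x.2] F) := by
    intro i
    induction i with
    | zero => simp
    | succ i ih =>
      rw [Finset.sum_antidiagonal_choose_succ_nsmul
        (fun l m => φ (N^[l] r) (D^[m] F)), Function.iterate_succ_apply', ih, map_sum]
      simp only [map_nsmul, h, nsmul_add, Finset.sum_add_distrib, Function.iterate_succ_apply']
      rw [add_comm]
      congr 1
      refine Finset.sum_congr rfl fun x hx => ?_
      rw [Nat.choose_symm_of_eq_add (Finset.HasAntidiagonal.mem_antidiagonal.1 hx).symm]
  have h2 := key p
  rw [hδ, Finset.Nat.sum_antidiagonal_eq_sum_range_succ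
    (fun l m => p.choose l • φ (N^[l] r) (D^[m] F)), Finset.sum_range_succ,
    Finset.sum_eq_single_of_mem 0 (Finset.mem_range.2 hp.out.pos)] at h2
  · simp only [Nat.choose_zero_right, Nat.choose_self, one_smul, Nat.sub_zero, Nat.sub_self,
      Function.iterate_zero, id] at h2
    rw [eq_neg_iff_add_eq_zero, add_comm]; exact h2.symm
  · intro l hl h0
    rw [nsmul_eq_mul, (CharP.cast_eq_zero_iff K p _).2
      (hp.out.dvd_choose_self h0 (Finset.mem_range.1 hl)), zero_mul]

end CharP

/-! ### Euclidean division -/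

/-- Euclidean division `A = Q L + R` by an operator `L`, monic of order `n`. -/
theorem exists_ore_div (n : ℕ) (L : K[X]) (hn : L.natDegree ≤ n) (hL : L.coeff n = 1) (A : K[X]) :
    ∃ Q R : K[X], A = oreEval (oreT δ) L Q + R ∧ ∀ k, n ≤ k → R.coeff k = 0 := by
  -- A dividend of order at most `n` needs a single step, with a quotient of order `0`.
  have lt : ∀ R : K[X], (∀ k, n < k → R.coeff k = 0) →
      ∃ Q R' : K[X], R = oreEval (oreT δ) L Q + R' ∧ ∀ k, n ≤ k → R'.coeff k = 0 := by
    intro R hR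
    refine ⟨C (R.coeff n), R - C (R.coeff n) * L, ?_, fun k hk => ?_⟩
    · rw [← monomial_zero_left, oreEval_monomial, smul_eq_C_mul]; simp
    · rw [coeff_sub, coeff_C_mul]
      obtain rfl | hlt := eq_or_lt_of_le hk
      · simp [hL]
      · rw [hR k hlt, coeff_eq_zero_of_natDegree_lt (hn.trans_lt hlt)]; simp
  have step : ∀ i, ∃ Q R : K[X], X ^ i = oreEval (oreT δ) L Q + R ∧
      ∀ k, n ≤ k → R.coeff k = 0 := by
    intro i
    induction i with
    | zero =>
      obtain ⟨Q, R, h, hR⟩ := lt 1 (fun k hk => by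
        rw [coeff_one, if_neg (by lia)])
      exact ⟨Q, R, by simpa using h, hR⟩
    | succ i ih =>
      obtain ⟨Q, R, h, hR⟩ := ih
      obtain ⟨Q', R', h', hR'⟩ := lt (oreT δ R) (by
        rintro (_ | k) hk
        · lia
        · rw [oreT_apply, coeff_add, coeff_X_mul, coeff_coeffDeriv, hR _ (by lia),
            hR _ (by lia)]
          simp)
      refine ⟨oreT δ Q + Q', R', ?_, hR'⟩
      rw [← oreT_iterate_one δ, Function.iterate_succ_apply', oreT_iterate_one, h, map_add, h',
        map_add, oreEval_oreT δ _ (oreT_smul δ), add_assoc]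
  induction A using Polynomial.induction_on' with
  | add f g hf hg =>
    obtain ⟨Q, R, h, hR⟩ := hf
    obtain ⟨Q', R', h', hR'⟩ := hg
    refine ⟨Q + Q', R + R', ?_, fun k hk => by rw [coeff_add, hR k hk, hR' k hk, add_zero]⟩
    rw [map_add]; nth_rw 1 [h, h']; abel
  | monomial i a =>
    obtain ⟨Q, R, h, hR⟩ := step i
    refine ⟨C a * Q, C a * R, ?_, fun k hk => by rw [coeff_C_mul, hR k hk, mul_zero]⟩
    rw [oreEval_C_mul, ← smul_X_eq_monomial, h, smul_add, smul_eq_C_mul, smul_eq_C_mul]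

/-! ### The companion connection and its dual -/

section Companion

/-- The connection `r ↦ r' - r B` on row vectors, dual to `F ↦ F' + B F`. -/
noncomputable def dualConn {n : ℕ} (B : Matrix (Fin n) (Fin n) K) :
    (Fin n → K) →+ (Fin n → K) where
  toFun r := (fun j => δ (r j)) - Matrix.vecMul r B
  map_zero' := by ext; simp
  map_add' r s := by
    ext j; simp only [Matrix.add_vecMul, Pi.sub_apply, Pi.add_apply, map_add]; ring

theorem dualConn_smul {n : ℕ} (B : Matrix (Fin n) (Fin n) K) (a : K) (r : Fin n → K) :
    dualConn δ B (a • r) = a • dualConn δ B r + δ a • r := by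
  ext j
  simp only [dualConn, AddMonoidHom.coe_mk, ZeroHom.coe_mk, Matrix.smul_vecMul, Pi.sub_apply,
    Pi.add_apply, Pi.smul_apply, smul_eq_mul, Derivation.leibniz]
  ring

/-- The connection `F ↦ F' + B F` on column vectors. -/
noncomputable def conn {n : ℕ} (B : Matrix (Fin n) (Fin n) K) :
    (Fin n → K) →+ (Fin n → K) where
  toFun F := (fun j => δ (F j)) + B.mulVec F
  map_zero' := by ext; simp
  map_add' r s := by
    ext j; simp only [Matrix.mulVec_add, Pi.add_apply, map_add]; ring

theorem dualConn_iterate_p (p : ℕ) [Fact p.Prime] [CharP K p] (hδ : ∀ a, δ^[p] a = 0)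
    {n : ℕ} (B : Matrix (Fin n) (Fin n) K) (r F : Fin n → K) :
    (dualConn δ B)^[p] r ⬝ᵥ F = - (r ⬝ᵥ (conn δ B)^[p] F) := by
  refine iterate_pairing δ p hδ (dualConn δ B) (conn δ B)
    (AddMonoidHom.mk' (fun r => AddMonoidHom.mk' (fun F => r ⬝ᵥ F) (dotProduct_add r))
      (fun r s => by
        refine AddMonoidHom.ext fun F => ?_
        exact add_dotProduct r s F)) (fun r F => ?_) r F
  change δ (r ⬝ᵥ F) = ((fun j => δ (r j)) - Matrix.vecMul r B) ⬝ᵥ F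
    + r ⬝ᵥ ((fun j => δ (F j)) + B.mulVec F)
  rw [sub_dotProduct, dotProduct_add, Matrix.dotProduct_mulVec]
  have : δ (r ⬝ᵥ F) = (fun j => δ (r j)) ⬝ᵥ F + r ⬝ᵥ (fun j => δ (F j)) := by
    simp only [dotProduct, map_sum, Derivation.leibniz, smul_eq_mul, ← Finset.sum_add_distrib]
    exact Finset.sum_congr rfl fun i _ => by ring
  rw [this]; ring

variable {n : ℕ} (b : Fin n → K)

/-- The companion matrix `B` of `∂ⁿ + ∑ bᵢ ∂^i`, in the convention where the system is
`Y' + B Y = 0` with `Y = (y, y', …)`. -/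
noncomputable def compMat : Matrix (Fin n) (Fin n) K :=
  Matrix.of fun (i j : Fin n) =>
      if (i : ℕ) + 1 = n then b j
      else if (j : ℕ) = (i : ℕ) + 1 then -1 else 0

/-- The unit vector `e_m`, indexed by a natural number so that `e_0` makes sense also for `n = 0`;
it is zero when `m ≥ n`. -/
def unitVec (K : Type*) [Field K] (n m : ℕ) : Fin n → K := fun i => if (i : ℕ) = m then 1 else 0

theorem unitVec_coe (i : Fin n) : unitVec K n i = Pi.single i 1 := by
  ext j; simp [unitVec, Pi.single_apply, Fin.ext_iff]

/-- The dual companion connection acts on the unit vectors as `∂` does on the classes of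
`1, ∂, …, ∂^(n-1)` modulo the left multiples of `L`. -/
theorem dualConn_unitVec (i : Fin n) :
    dualConn δ (compMat b) (unitVec K n i) =
      if (i : ℕ) + 1 = n then -b else unitVec K n (i + 1) := by
  have h0 : (fun j => δ (unitVec K n i j)) = 0 := by
    ext j; simp only [unitVec]; split_ifs <;> simp
  change (fun j => δ (unitVec K n i j)) - Matrix.vecMul _ _ = _
  rw [h0, unitVec_coe, Matrix.single_one_vecMul]
  ext j
  by_cases h : (i : ℕ) + 1 = n
  · simp [compMat, h]
  · by_cases h' : (j : ℕ) = i + 1 <;> simp [compMat, h, h', unitVec]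

theorem dualConn_iterate_unitVec (m : ℕ) (hm : m < n) :
    (dualConn δ (compMat b))^[m] (unitVec K n 0) = unitVec K n m := by
  induction m with
  | zero => rfl
  | succ m ih =>
    rw [Function.iterate_succ_apply', ih (by lia)]
    have := dualConn_unitVec δ b ⟨m, by lia⟩
    rwa [if_neg (by simp; lia)] at this

/-- The coordinates of the class of an operator modulo the left multiples `Q L`, in the basis
`1, ∂, …, ∂^(n-1)`; it is obtained by applying operators to `e_0`. -/
noncomputable def oreRem : K[X] →+ (Fin n → K) :=
  oreEval (dualConn δ (compMat b)) (unitVec K n 0)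

theorem oreRem_of_deg_lt (R : K[X]) (hR : ∀ k, n ≤ k → R.coeff k = 0) (i : Fin n) :
    oreRem δ b R i = R.coeff i := by
  have h : R = ∑ k : Fin n, monomial (k : ℕ) (R.coeff k) := by
    rw [Fin.sum_univ_eq_sum_range (fun k => monomial k (R.coeff k)) n]
    ext k
    rw [finsetSum_coeff]
    simp only [coeff_monomial, Finset.sum_ite_eq', Finset.mem_range]
    split_ifs with h
    · rfl
    · exact hR k (by lia)
  have h2 : oreRem δ b R = ∑ k : Fin n, R.coeff k • Pi.single k 1 := by
    conv_lhs => rw [h]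
    rw [map_sum]
    refine Finset.sum_congr rfl fun k _ => ?_
    rw [oreRem, oreEval_monomial, dualConn_iterate_unitVec δ b k k.2, unitVec_coe]
  rw [h2]
  simp [Finset.sum_apply, Pi.single_apply]

theorem oreRem_L : oreRem δ b (monomial n 1 + ∑ i : Fin n, monomial (i : ℕ) (b i)) = 0 := by
  obtain _ | m := n
  · exact Subsingleton.elim _ _
  · have h1 : oreRem δ b (monomial (m + 1) 1) = -b := by
      rw [oreRem, oreEval_monomial, one_smul, Function.iterate_succ_apply',
        dualConn_iterate_unitVec δ b m (by lia)]
      have := dualConn_unitVec δ b (Fin.last m)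
      simpa using this
    have h2 : oreRem δ b (∑ i : Fin (m + 1), monomial (i : ℕ) (b i)) = b := by
      ext i
      rw [oreRem_of_deg_lt]
      · simp [coeff_monomial, Fin.val_inj]
      · intro k hk
        rw [finsetSum_coeff]
        exact Finset.sum_eq_zero fun i _ => coeff_monomial_of_ne _ (by lia)
    rw [map_add, h1, h2, neg_add_cancel]

/-- The equivalence for a field `K` of characteristic `p` and any derivation with `δ^p = 0`. The
product `oreEval (oreT δ) Q L` is `L Q`. -/
theorem conn_iterate_p_eq_zero_iff (p : ℕ) [Fact p.Prime] [CharP K p] (hδ : ∀ a, δ^[p] a = 0) (L : K[X])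
    (hL : L = monomial n 1 + ∑ i : Fin n, monomial (i : ℕ) (b i)) :
    (∀ F, (conn δ (compMat b))^[p] F = 0) ↔ ∃ Q, X ^ p = oreEval (oreT δ) Q L := by
  have pair := dualConn_iterate_p δ p hδ (compMat b)
  have hrem : oreRem δ b L = 0 := hL ▸ oreRem_L δ b
  have hsmul := dualConn_smul δ (compMat b)
  constructor
  · intro h
    have hdeg : ∀ k, n < k → L.coeff k = 0 := fun k hk => by
      rw [hL, coeff_add, coeff_monomial_of_ne _ (by lia), finsetSum_coeff, zero_add]
      exact Finset.sum_eq_zero fun i _ => coeff_monomial_of_ne _ (by lia)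
    have hlc : L.coeff n = 1 := by
      rw [hL, coeff_add, coeff_monomial_same, finsetSum_coeff, Finset.sum_eq_zero, add_zero]
      exact fun i _ => coeff_monomial_of_ne _ (by lia)
    obtain ⟨Q, R, hQR, hR⟩ := exists_ore_div δ n L (natDegree_le_iff_coeff_eq_zero.2 hdeg) hlc
      (X ^ p)
    have h0 : oreRem δ b (X ^ p) = 0 := by
      rw [oreRem, oreEval_X_pow]
      refine dotProduct_eq_zero _ fun F => ?_
      rw [pair, h, dotProduct_zero, neg_zero]
    have hR0 : oreRem δ b R = 0 := by
      rw [hQR, map_add, oreRem, oreEval_oreEval δ _ hsmul] at h0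
      change oreEval _ (oreRem δ b L) Q + oreRem δ b R = 0 at h0
      rwa [hrem, oreEval_zero_right, zero_add] at h0
    have : R = 0 := by
      ext k
      by_cases hk : n ≤ k
      · rw [hR k hk, coeff_zero]
      · have := oreRem_of_deg_lt δ b R hR ⟨k, by lia⟩
        rw [hR0] at this
        exact this.symm
    rw [this, add_zero] at hQR
    exact ⟨Q, oreEval_comm_p δ p hδ hQR⟩
  · rintro ⟨Q, hQ⟩ F
    have hQ' := oreEval_comm_p δ p hδ hQ
    have h0 : (dualConn δ (compMat b))^[p] (unitVec K n 0) = 0 := by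
      rw [← oreEval_X_pow (K := K), hQ', oreEval_oreEval δ _ hsmul]
      change oreEval _ (oreRem δ b L) Q = 0
      rw [hrem, oreEval_zero_right]
    ext i
    have h1 : (dualConn δ (compMat b))^[p] (Pi.single i 1) = 0 := by
      rw [← unitVec_coe, ← dualConn_iterate_unitVec δ b i i.2, ← Function.iterate_add_apply,
        add_comm, Function.iterate_add_apply, h0, iterate_map_zero]
    have h2 := pair (Pi.single i 1) F
    rw [h1, zero_dotProduct, single_one_dotProduct] at h2
    simpa using h2.symm

end Companion

end OreModule

/-! ### The derivation of the field of rational functions -/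

section RDeriv
variable {F : Type*} [Field F]

/-- The quotient rule holds for every representation as a fraction, not only the reduced one. -/
theorem rderiv_div (a b : F[X]) (hb : b ≠ 0) :
    rderiv (algebraMap F[X] (RatFunc F) a / algebraMap F[X] (RatFunc F) b) =
      algebraMap F[X] (RatFunc F) (derivative a * b - a * derivative b) /
        algebraMap F[X] (RatFunc F) (b ^ 2) := by
  set f := algebraMap F[X] (RatFunc F) a / algebraMap F[X] (RatFunc F) b with hf
  have h : f.num * b = a * f.denom := (RatFunc.num_mul_eq_mul_denom_iff hb).2 hf
  have hd := RatFunc.denom_ne_zero f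
  have h' := congrArg derivative h
  rw [derivative_mul, derivative_mul] at h'
  rw [rderiv, div_eq_div_iff (RatFunc.algebraMap_ne_zero (pow_ne_zero 2 hd))
    (RatFunc.algebraMap_ne_zero (pow_ne_zero 2 hb)), ← map_mul, ← map_mul]
  congr 1
  linear_combination (b * f.denom) * h' - (derivative b * f.denom + b * derivative f.denom) * h

theorem ratFunc_cases (f : RatFunc F) : ∃ a b : F[X], b ≠ 0 ∧
    f = algebraMap F[X] (RatFunc F) a / algebraMap F[X] (RatFunc F) b :=
  ⟨f.num, f.denom, f.denom_ne_zero, f.num_div_denom.symm⟩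

theorem rderiv_add (f g : RatFunc F) : rderiv (f + g) = rderiv f + rderiv g := by
  obtain ⟨a, b, hb, rfl⟩ := ratFunc_cases f
  obtain ⟨c, d, hd, rfl⟩ := ratFunc_cases g
  have hb' := RatFunc.algebraMap_ne_zero hb
  have hd' := RatFunc.algebraMap_ne_zero hd
  rw [div_add_div _ _ hb' hd', ← map_mul, ← map_mul, ← map_mul, ← map_add,
    rderiv_div _ _ (mul_ne_zero hb hd), rderiv_div _ _ hb, rderiv_div _ _ hd]
  simp only [derivative_mul, map_sub, map_add, map_mul, map_pow]
  field_simp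
  ring

theorem rderiv_mul (f g : RatFunc F) : rderiv (f * g) = f * rderiv g + g * rderiv f := by
  obtain ⟨a, b, hb, rfl⟩ := ratFunc_cases f
  obtain ⟨c, d, hd, rfl⟩ := ratFunc_cases g
  have hb' := RatFunc.algebraMap_ne_zero hb
  have hd' := RatFunc.algebraMap_ne_zero hd
  rw [div_mul_div_comm, ← map_mul, ← map_mul,
    rderiv_div _ _ (mul_ne_zero hb hd), rderiv_div _ _ hb, rderiv_div _ _ hd]
  simp only [derivative_mul, map_sub, map_add, map_mul, map_pow]
  field_simp
  ring

/-- `rderiv` as a derivation. -/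
noncomputable def rderivation (F : Type*) [Field F] : FieldDerivation (RatFunc F) :=
  FieldDerivation.mk rderiv rderiv_add rderiv_mul

/-- `δ^p = 0` on `F(x)` in characteristic `p`: writing `a / b = (a b^(p-1)) / b^p`, the denominator
is a constant, and `p!` divides the `p`-th derivative of a polynomial. -/
theorem rderiv_iterate_p (p : ℕ) [hp : Fact p.Prime] [CharP F p] (f : RatFunc F) :
    rderiv^[p] f = 0 := by
  obtain ⟨a, b, hb, rfl⟩ := ratFunc_cases f
  have hb' := RatFunc.algebraMap_ne_zero hb
  have hconst : derivative (b ^ p) = 0 := by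
    rw [derivative_pow, CharP.cast_eq_zero, map_zero, zero_mul, zero_mul]
  have hp0 : b ^ p ≠ 0 := pow_ne_zero p hb
  have hp1 := RatFunc.algebraMap_ne_zero hp0
  have hf : algebraMap F[X] (RatFunc F) a / algebraMap F[X] (RatFunc F) b =
      algebraMap F[X] (RatFunc F) (a * b ^ (p - 1)) / algebraMap F[X] (RatFunc F) (b ^ p) := by
    rw [div_eq_div_iff hb' hp1, ← map_mul, ← map_mul, mul_assoc,
      pow_sub_one_mul hp.out.ne_zero]
  have key : ∀ (g : F[X]) (i : ℕ),
      rderiv^[i] (algebraMap F[X] (RatFunc F) g / algebraMap F[X] (RatFunc F) (b ^ p))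
        = algebraMap F[X] (RatFunc F) (derivative^[i] g) /
          algebraMap F[X] (RatFunc F) (b ^ p) := by
    intro g i
    induction i with
    | zero => rfl
    | succ i ih =>
      rw [Function.iterate_succ_apply', ih, rderiv_div _ _ hp0, hconst, mul_zero, sub_zero,
        Function.iterate_succ_apply', pow_two, map_mul, map_mul, mul_div_mul_right _ _ hp1]
  rw [hf, key, iterate_derivative_eq_factorial_smul_sum, ← Nat.cast_smul_eq_nsmul F,
    (CharP.cast_eq_zero_iff F p _).2 (hp.out.dvd_factorial.2 le_rfl), zero_smul, map_zero,
    zero_div]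

/-- The explicit product `omul` is the composition product of the Ore ring. -/
theorem omul_eq_oreEval (A B : Polynomial (RatFunc F)) :
    omul A B = oreEval (oreT (rderivation F)) B A := by
  change _ = A.sum fun i a => a • (oreT (rderivation F))^[i] B
  unfold omul
  refine Finset.sum_congr rfl fun i _ => ?_
  change _ = A.coeff i • (oreT (rderivation F))^[i] B
  conv_rhs => rw [B.as_sum_support, iterate_map_finsetSum]
  rw [Finset.smul_sum]
  refine Finset.sum_congr rfl fun j _ => ?_
  rw [oreT_iterate_monomial, Finset.smul_sum]
  refine Finset.sum_congr rfl fun l _ => ?_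
  rw [smul_monomial, smul_eq_mul, mul_left_comm, mul_assoc]
  rfl

end RDeriv

set_option synthInstance.maxHeartbeats 1000000 in
/-- Let `L = ∂ⁿ + b_{n−1}∂^{n−1} + ⋯ + b₀` be a monic differential operator of order `n`
over `𝔽_p(x)`, with companion matrix `B(x)` and associated map `Δ : F ↦ F' + B·F`.
Then the `p`-curvature `Δ^p` vanishes if and only if `L` divides `∂^p` on the left in
the Ore ring `𝔽_p(x)⟨∂⟩`. -/
theorem pCurvature_zero_iff_dvd_partial_pow_p
    (p : ℕ) [Fact p.Prime] (n : ℕ) (b : Fin n → RatFunc (ZMod p))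
    (L : Polynomial (RatFunc (ZMod p)))
    (hL : L = Polynomial.monomial n 1 +
      ∑ i : Fin n, Polynomial.monomial (i : ℕ) (b i))
    (B : Matrix (Fin n) (Fin n) (RatFunc (ZMod p)))
    (hB : B = Matrix.of fun (i j : Fin n) =>
      if (i : ℕ) + 1 = n then b j
      else if (j : ℕ) = (i : ℕ) + 1 then -1 else 0) :
    (∀ F : Fin n → RatFunc (ZMod p),
        (fun G : Fin n → RatFunc (ZMod p) =>
          (fun j => rderiv (G j)) + B.mulVec G)^[p] F = 0) ↔
      ∃ Q : Polynomial (RatFunc (ZMod p)), Polynomial.X ^ p = omul L Q := by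
  subst hB
  simp only [omul_eq_oreEval]
  have : CharP (RatFunc (ZMod p)) p :=
    charP_of_injective_algebraMap (algebraMap (ZMod p) (RatFunc (ZMod p))).injective p
  exact conn_iterate_p_eq_zero_iff (rderivation (ZMod p)) b p (rderiv_iterate_p p) L hL
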